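/- Let c ≥ 0. There exists a nonnegative weight vector w ∈ ℝ^N with Σᵢ wᵢ = c and λ₂(L(w)) = 2c/N if and only if for all u₁, u₂ ∈ ℝ^N with u₁ᵀ𝟙 = u₂ᵀ𝟙 = 0 one has u₁ᵀL₁u₁ + u₂ᵀL₂u₂ ≥ (c/N)‖u₁ + u₂‖² (i.e., if and only if c is at most the threshold budget c* = N · inf{(u₁ᵀL₁u₁ + u₂ᵀL₂u₂)/‖u₁+u₂‖² : u₁ᵀ𝟙 = u₂ᵀ𝟙 = 0, u₁ + u₂ ≠ 0}). -/

import Mathlib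

open Matrix

/-- The supra-Laplacian of a two-layer multiplex with layer Laplacians `L₁`, `L₂`
and one-to-one inter-layer weights `w`: the block matrix
`[[L₁ + W, −W], [−W, L₂ + W]]` with `W = diag w`. -/
noncomputable def supraLaplacian {N : ℕ} (L₁ L₂ : Matrix (Fin N) (Fin N) ℝ)
    (w : Fin N → ℝ) : Matrix (Fin N ⊕ Fin N) (Fin N ⊕ Fin N) ℝ :=
  Matrix.fromBlocks (L₁ + Matrix.diagonal w) (-Matrix.diagonal w)
    (-Matrix.diagonal w) (L₂ + Matrix.diagonal w)

/-- Algebraic connectivity: the minimum of `vᵀ M v` over unit vectors `v`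
orthogonal to the all-ones vector (the minimum is attained, so it equals the inf). -/
noncomputable def lambda2 {n : Type*} [Fintype n] (M : Matrix n n ℝ) : ℝ :=
  sInf {x : ℝ | ∃ v : n → ℝ, v ⬝ᵥ v = 1 ∧ v ⬝ᵥ (fun _ => 1) = 0 ∧ x = v ⬝ᵥ M *ᵥ v}

lemma supra_quad {N : ℕ} (L₁ L₂ : Matrix (Fin N) (Fin N) ℝ) (w x y : Fin N → ℝ) :
    Sum.elim x y ⬝ᵥ supraLaplacian L₁ L₂ w *ᵥ Sum.elim x y =
      x ⬝ᵥ L₁ *ᵥ x + y ⬝ᵥ L₂ *ᵥ y + ∑ i, w i * (x i - y i) ^ 2 := by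
  have e : ∑ i, w i * (x i - y i) ^ 2 =
      x ⬝ᵥ diagonal w *ᵥ x - x ⬝ᵥ diagonal w *ᵥ y - y ⬝ᵥ diagonal w *ᵥ x
        + y ⬝ᵥ diagonal w *ᵥ y := by
    simp only [dotProduct, mulVec_diagonal, ← Finset.sum_sub_distrib, ← Finset.sum_add_distrib]
    exact Finset.sum_congr rfl fun i _ => by ring
  rw [e, supraLaplacian, fromBlocks_mulVec]
  simp only [Sum.elim_comp_inl, Sum.elim_comp_inr, sumElim_dotProduct_sumElim, add_mulVec,
    neg_mulVec, dotProduct_add, dotProduct_neg]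
  ring

lemma quad_shift {N : ℕ} (L : Matrix (Fin N) (Fin N) ℝ) (hL : L.PosSemidef)
    (h1 : L *ᵥ (fun _ => 1) = 0) (a t : ℝ) (x : Fin N → ℝ) :
    (fun i => a + t * x i) ⬝ᵥ L *ᵥ (fun i => a + t * x i) = t ^ 2 * (x ⬝ᵥ L *ᵥ x) := by
  have hT : Lᵀ = L := by
    have h := hL.1.eq
    rwa [conjTranspose_eq_transpose_of_trivial] at h
  have e : (fun i => a + t * x i) = a • (fun _ : Fin N => (1 : ℝ)) + t • x := by
    ext i; simp
  have h2 : (fun _ => (1 : ℝ)) ⬝ᵥ L *ᵥ x = 0 := by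
    rw [dotProduct_mulVec, ← mulVec_transpose, hT, h1, zero_dotProduct]
  rw [e, mulVec_add, mulVec_smul, mulVec_smul, h1]
  simp only [smul_zero, zero_add, add_dotProduct, smul_dotProduct, dotProduct_smul, h2, smul_eq_mul]
  ring

lemma psd_nonneg {N : ℕ} (L : Matrix (Fin N) (Fin N) ℝ) (hL : L.PosSemidef) (x : Fin N → ℝ) :
    0 ≤ x ⬝ᵥ L *ᵥ x := by
  simpa using hL.dotProduct_mulVec_nonneg x

lemma lambda2_le {n : Type*} [Fintype n] (M : Matrix n n ℝ) (hM : ∀ v, 0 ≤ v ⬝ᵥ M *ᵥ v)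
    (v : n → ℝ) (hv : v ⬝ᵥ (fun _ => 1) = 0) :
    lambda2 M * (v ⬝ᵥ v) ≤ v ⬝ᵥ M *ᵥ v := by
  by_cases h0 : v ⬝ᵥ v = 0
  · rw [h0, mul_zero]; exact hM v
  have hp : 0 < v ⬝ᵥ v := lt_of_le_of_ne
    (Finset.sum_nonneg fun i _ => mul_self_nonneg (v i)) (Ne.symm h0)
  set s := Real.sqrt (v ⬝ᵥ v) with hs
  have hs2 : s * s = v ⬝ᵥ v := Real.mul_self_sqrt hp.le
  have hs0 : 0 < s := Real.sqrt_pos.2 hp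
  have : lambda2 M ≤ s⁻¹ * (s⁻¹ * (v ⬝ᵥ M *ᵥ v)) := by
    apply csInf_le
    · refine ⟨0, ?_⟩
      rintro x ⟨v, -, -, rfl⟩
      exact hM v
    · refine ⟨s⁻¹ • v, ?_, ?_, ?_⟩
      · simp only [smul_dotProduct, dotProduct_smul, smul_eq_mul, ← hs2]
        field_simp
      · simp [smul_dotProduct, hv]
      · simp [smul_dotProduct, dotProduct_smul, mulVec_smul]
  rw [← hs2]
  calc lambda2 M * (s * s) ≤ (s⁻¹ * (s⁻¹ * (v ⬝ᵥ M *ᵥ v))) * (s * s) := by gcongr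
    _ = _ := by field_simp

lemma lin_zero (a b : ℝ) (h : ∀ t : ℝ, 0 ≤ b * t + a * t ^ 2) : b = 0 := by
  by_contra hb
  have h1 := h (-b / (|a| + 1))
  have hp : 0 < |a| + 1 := by positivity
  have e : b * (-b / (|a| + 1)) + a * (-b / (|a| + 1)) ^ 2 =
      b ^ 2 * (a - (|a| + 1)) / (|a| + 1) ^ 2 := by field_simp; ring
  rw [e] at h1
  have : b ^ 2 * (a - (|a| + 1)) / (|a| + 1) ^ 2 < 0 := by
    apply div_neg_of_neg_of_pos _ (by positivity)
    apply mul_neg_of_pos_of_neg (by positivity)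
    linarith [le_abs_self a]
  linarith

theorem stmt6 {N : ℕ} (hN : 1 ≤ N)
    (L₁ L₂ : Matrix (Fin N) (Fin N) ℝ)
    (hL₁ : L₁.PosSemidef) (hL₂ : L₂.PosSemidef)
    (hL₁1 : L₁ *ᵥ (fun _ => 1) = 0) (hL₂1 : L₂ *ᵥ (fun _ => 1) = 0)
    (c : ℝ) (hc : 0 ≤ c) :
    (∃ w : Fin N → ℝ, (∀ i, 0 ≤ w i) ∧ (∑ i, w i) = c ∧
        lambda2 (supraLaplacian L₁ L₂ w) = 2 * c / N) ↔
      (∀ u₁ u₂ : Fin N → ℝ, u₁ ⬝ᵥ (fun _ => 1) = 0 → u₂ ⬝ᵥ (fun _ => 1) = 0 →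
        u₁ ⬝ᵥ L₁ *ᵥ u₁ + u₂ ⬝ᵥ L₂ *ᵥ u₂ ≥ (c / N) * ((u₁ + u₂) ⬝ᵥ (u₁ + u₂))) := by
  have hN0 : (0 : ℝ) < N := by exact_mod_cast hN
  obtain ⟨k, hk⟩ : ∃ k, k = c / N := ⟨_, rfl⟩
  have hck : c = N * k := by rw [hk]; field_simp
  have hk2 : 2 * c / N = 2 * k := by rw [hk]; ring
  rw [← hk, hk2]
  -- the key identity for uniform weights
  have key : ∀ x y : Fin N → ℝ, ∑ i, k * (x i - y i) ^ 2 =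
      2 * k * (x ⬝ᵥ x + y ⬝ᵥ y) - k * ((x + y) ⬝ᵥ (x + y)) := by
    intro x y
    simp only [dotProduct, Pi.add_apply, ← Finset.sum_add_distrib, Finset.mul_sum,
      ← Finset.sum_sub_distrib]
    exact Finset.sum_congr rfl fun i _ => by ring
  constructor
  · rintro ⟨w, hw, hwc, hl⟩ u₁ u₂ h₁ h₂
    have hM : ∀ v, 0 ≤ v ⬝ᵥ supraLaplacian L₁ L₂ w *ᵥ v := by
      intro v
      rw [← Sum.elim_comp_inl_inr v, supra_quad]
      have := psd_nonneg L₁ hL₁ (v ∘ Sum.inl)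
      have := psd_nonneg L₂ hL₂ (v ∘ Sum.inr)
      have : 0 ≤ ∑ i, w i * ((v ∘ Sum.inl) i - (v ∘ Sum.inr) i) ^ 2 :=
        Finset.sum_nonneg fun i _ => mul_nonneg (hw i) (sq_nonneg _)
      linarith
    have hle := lambda2_le _ hM
    rw [hl] at hle
    have hle' : ∀ x y : Fin N → ℝ, ∑ i, x i + ∑ i, y i = 0 → 2 * k * (x ⬝ᵥ x + y ⬝ᵥ y) ≤
        x ⬝ᵥ L₁ *ᵥ x + y ⬝ᵥ L₂ *ᵥ y + ∑ i, w i * (x i - y i) ^ 2 := by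
      intro x y hxy
      have := hle (Sum.elim x y) (by simpa [dotProduct] using hxy)
      rwa [supra_quad, sumElim_dotProduct_sumElim] at this
    have hsum : ∑ i, (w i - k) ^ 2 = 0 := by
      have hz : ∑ i, (w i - k) = 0 := by
        rw [Finset.sum_sub_distrib, hwc, hck]; simp
      have := lin_zero ((fun i => w i - k) ⬝ᵥ L₁ *ᵥ (fun i => w i - k)
          + (fun i => w i - k) ⬝ᵥ L₂ *ᵥ (fun i => w i - k)
          + 4 * ∑ i, (w i - k) ^ 3) (8 * ∑ i, (w i - k) ^ 2) ?_
      · linarith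
      intro t
      have h := hle' (fun i => 1 + t * (w i - k)) (fun i => -1 + (-t) * (w i - k)) (by
        rw [← Finset.sum_add_distrib]
        exact Finset.sum_eq_zero fun i _ => by ring)
      rw [quad_shift L₁ hL₁ hL₁1 1 t (fun i => w i - k),
        quad_shift L₂ hL₂ hL₂1 (-1) (-t) (fun i => w i - k)] at h
      have e : ∑ i, w i * ((1 + t * (w i - k)) - (-1 + (-t) * (w i - k))) ^ 2
          - 2 * k * ((fun i => 1 + t * (w i - k)) ⬝ᵥ (fun i => 1 + t * (w i - k))
            + (fun i => -1 + (-t) * (w i - k)) ⬝ᵥ (fun i => -1 + (-t) * (w i - k)))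
          = 4 * ∑ i, (w i - k) + 8 * t * ∑ i, (w i - k) ^ 2 + 4 * t ^ 2 * ∑ i, (w i - k) ^ 3 := by
        simp only [dotProduct, ← Finset.sum_add_distrib, Finset.mul_sum,
          ← Finset.sum_sub_distrib]
        exact Finset.sum_congr rfl fun i _ => by ring
      rw [hz] at e
      linarith
    have hwk : ∀ i, w i = k := by
      intro i
      have := (Finset.sum_eq_zero_iff_of_nonneg (fun i _ => sq_nonneg (w i - k))).1 hsum i
        (Finset.mem_univ i)
      have := pow_eq_zero_iff (two_ne_zero) |>.1 this
      linarith
    have h := hle' u₁ u₂ (by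
      simp only [dotProduct, mul_one] at h₁ h₂
      linarith)
    simp only [hwk] at h
    rw [key] at h
    linarith
  · intro H
    refine ⟨fun _ => k, fun _ => by rw [hk]; positivity, by simp [hck], ?_⟩
    apply IsLeast.csInf_eq
    constructor
    · obtain ⟨s, hs⟩ : ∃ s : ℝ, s ^ 2 * (2 * N) = 1 :=
        ⟨Real.sqrt (2 * N)⁻¹, by rw [Real.sq_sqrt (by positivity)]; field_simp⟩
      refine ⟨Sum.elim (fun _ => s) (fun _ => -s), ?_, ?_, ?_⟩
      · rw [sumElim_dotProduct_sumElim]; simp [dotProduct]; linarith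
      · simp [dotProduct]
      · rw [supra_quad]
        have h₁ := quad_shift L₁ hL₁ hL₁1 s 0 0
        have h₂ := quad_shift L₂ hL₂ hL₂1 (-s) 0 0
        simp only [zero_mul, add_zero, ne_eq, OfNat.ofNat_ne_zero, not_false_eq_true,
          zero_pow] at h₁ h₂
        rw [h₁, h₂]
        simp
        linear_combination (-2 * k) * hs
    · rintro _ ⟨v, hv1, hv0, rfl⟩
      rw [← Sum.elim_comp_inl_inr v] at hv1 hv0 ⊢
      generalize v ∘ Sum.inl = x at *
      generalize v ∘ Sum.inr = y at *
      rw [supra_quad, key]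
      rw [sumElim_dotProduct_sumElim] at hv1
      rw [hv1]
      have hxy : ∑ i, x i + ∑ i, y i = 0 := by simpa [dotProduct] using hv0
      obtain ⟨a, ha⟩ : ∃ a, a = (∑ i, x i) / N := ⟨_, rfl⟩
      have hax : ∑ i, x i = N * a := by rw [ha]; field_simp
      have h := H (fun i => -a + 1 * x i) (fun i => a + 1 * y i)
        (by simp [dotProduct, Finset.sum_add_distrib]; linarith)
        (by simp [dotProduct, Finset.sum_add_distrib]; linarith)
      rw [quad_shift L₁ hL₁ hL₁1, quad_shift L₂ hL₂ hL₂1] at h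
      have e : ((fun i => -a + 1 * x i) + (fun i => a + 1 * y i)) = x + y := by
        ext i; simp only [Pi.add_apply]; ring
      rw [e] at h
      linarith
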